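/- (Linear independence of noncrossing symbols.) Let V = ℂ². For an m-partite noncrossing pair partition π of [md], define ω̃_π : (V*)^m → ℂ by ω̃_π(y₁, ..., y_m) = Π_{{i,j} ∈ π, i<j} [y_{c(i)}, y_{c(j)}], where c(i) is the index of the length-d interval containing i and [·,·] is the determinant bracket. Then the family of functions { ω̃_π : π an m-partite noncrossing pair partition of [md] } is linearly independent. -/

import Mathlib

/-!
The proof is a leading-term argument. Substitute `y_k = (X_k, 1)`: the bracket of a block
`{i < j}` becomes `X_{c(i)} - X_{c(j)}`, and since `c(i) < c(j)` its lexicographically leading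
monomial is `X_{c(i)}`. The symbol of `π` thus becomes a monic polynomial whose multidegree counts,
for every interval, the openers (smaller elements of a block) lying in it.

This multidegree determines `π`. An opener followed by a closer in the same interval would force a
crossing, so the openers of an interval form a final segment of it and are determined by their
number; and a noncrossing pairing is determined by its openers. The restricted symbols are therefore
monic polynomials of pairwise distinct multidegrees.
-/

/-- The bracket `[v, w]` of two vectors in `ℂ²`: the determinant of the `2 × 2`
matrix with columns `v` and `w`. -/
def bracket (v w : Fin 2 → ℂ) : ℂ := v 0 * w 1 - v 1 * w 0

/-- The index `c(i) ∈ {1, ..., m}` (0-indexed) of the length-`d` interval containing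
`i ∈ {1, ..., md}` (0-indexed, so `c(i) = i / d`). -/
def intervalIdx (m d : ℕ) (i : Fin (m * d)) : Fin m :=
  ⟨(i : ℕ) / d, by
    rcases Nat.eq_zero_or_pos d with h | h
    · subst h; exact absurd i.2 (by simp)
    · exact (Nat.div_lt_iff_lt_mul h).mpr i.2⟩

/-- A pair partition of `{1, ..., N}`, encoded as a fixed-point-free involution: the
blocks are the pairs `{i, σ i}`. -/
def IsPairing {N : ℕ} (σ : Equiv.Perm (Fin N)) : Prop :=
  σ * σ = 1 ∧ ∀ i, σ i ≠ i

/-- The pair partition encoded by `σ` is noncrossing: there are no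
`i < i' < j < j'` with `{i, j}` and `{i', j'}` blocks. -/
def PairingNoncrossing {N : ℕ} (σ : Equiv.Perm (Fin N)) : Prop :=
  ∀ i i' : Fin N, i < i' → i' < σ i → ¬ (σ i < σ i')

/-- The pair partition encoded by `σ` is `m`-partite with respect to the consecutive
intervals of length `d`: each block contains at most one element of each interval,
i.e. the two elements of any pair lie in different intervals. -/
def PairingMPartite (m d : ℕ) (σ : Equiv.Perm (Fin (m * d))) : Prop :=
  ∀ i, intervalIdx m d (σ i) ≠ intervalIdx m d i

/-- The symbol `ω̃_π : (V*)^m → ℂ` of the pair partition `π` (encoded by the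
involution `σ`): `ω̃_π(y₁, ..., y_m) = Π_{{i,j} ∈ π, i<j} [y_{c(i)}, y_{c(j)}]`. -/
noncomputable def symbolFun (m d : ℕ) (σ : Equiv.Perm (Fin (m * d)))
    (y : Fin m → Fin 2 → ℂ) : ℂ :=
  ∏ i ∈ Finset.univ.filter (fun i : Fin (m * d) => i < σ i),
    bracket (y (intervalIdx m d i)) (y (intervalIdx m d (σ i)))

open MvPolynomial Finset

section Combinatorics

variable {α ι : Type*} [LinearOrder α]

/-- A noncrossing pair partition of the linear order `α`, encoded like `IsPairing` and
`PairingNoncrossing` by the map exchanging the two elements of each block. -/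
structure IsNoncrossingPairing (σ : α → α) : Prop where
  involutive : Function.Involutive σ
  apply_ne : ∀ i, σ i ≠ i
  noncrossing : ∀ i j, i < j → j < σ i → ¬ σ i < σ j

/-- The openers of the pairing encoded by `σ`: the smaller elements of its blocks. -/
def openers [Fintype α] (σ : α → α) : Finset α := {i | i < σ i}

lemma mem_openers [Fintype α] {σ : α → α} {i : α} : i ∈ openers σ ↔ i < σ i := by
  simp [openers]

lemma lt_of_mem_openers [Fintype α] [PartialOrder ι] {c : α → ι} (hc : Monotone c) {σ : α → α}
    (hcσ : ∀ i, c (σ i) ≠ c i) {i : α} (hi : i ∈ openers σ) : c i < c (σ i) :=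
  lt_of_le_of_ne (hc (mem_openers.1 hi).le) (hcσ i).symm

namespace IsNoncrossingPairing

variable {σ τ : α → α}

/-- One half of the induction step of `eq_of_lt_apply_iff`. If `σ i < τ i`, then the closer `σ i`
lies inside the block `{i, τ i}`, so its opener under `τ` is larger than `i`, where `σ` and `τ`
agree. -/
lemma apply_le_apply_of_forall_gt_eq (hσ : Function.Involutive σ) (hτ : IsNoncrossingPairing τ)
    (h : ∀ i, i < σ i ↔ i < τ i) {i : α} (hi : i < σ i)
    (heq : ∀ k, i < k → k < τ k → σ k = τ k) : τ i ≤ σ i := by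
  by_contra! hlt
  have τ_σ_ne : τ (σ i) ≠ i := fun he => hlt.ne (hτ.involutive.eq_iff.1 he)
  have τ_σ_lt : τ (σ i) < σ i := by
    have not_opener : ¬ σ i < τ (σ i) := by rw [← h, hσ i]; exact hi.asymm
    exact lt_of_le_of_ne (not_lt.1 not_opener) (hτ.apply_ne _)
  have lt_τ_σ : i < τ (σ i) := by
    refine lt_of_le_of_ne (le_of_not_gt fun hgt => ?_) τ_σ_ne.symm
    have := hτ.noncrossing (τ (σ i)) i hgt
    rw [hτ.involutive] at this
    exact this hi hlt
  have σ_eq : σ (τ (σ i)) = σ i := by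
    simpa only [hτ.involutive (σ i)] using heq _ lt_τ_σ (by rwa [hτ.involutive])
  exact τ_σ_ne (hσ.injective σ_eq)

lemma eq_of_lt_apply_iff [WellFoundedGT α] (hσ : IsNoncrossingPairing σ)
    (hτ : IsNoncrossingPairing τ) (h : ∀ i, i < σ i ↔ i < τ i) : σ = τ := by
  have eq_of_opener : ∀ i, i < σ i → σ i = τ i := by
    intro i
    induction i using WellFoundedGT.induction with
    | ind i ih =>
      intro hi
      refine le_antisymm ?_ ?_
      · exact apply_le_apply_of_forall_gt_eq hτ.involutive hσ (fun k => (h k).symm) ((h i).1 hi)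
          fun k hik hk => (ih k hik hk).symm
      · exact apply_le_apply_of_forall_gt_eq hσ.involutive hτ h hi
          fun k hik hk => ih k hik ((h k).2 hk)
  funext i
  rcases (hσ.apply_ne i).lt_or_gt with hi | hi
  · have := eq_of_opener (σ i) (by rwa [hσ.involutive])
    rw [hσ.involutive] at this
    exact hτ.involutive.eq_iff.1 this.symm
  · exact eq_of_opener i hi

lemma lt_apply_of_le_of_fiber_eq [PartialOrder ι] {c : α → ι} (hc : Monotone c)
    (hσ : IsNoncrossingPairing σ) (hcσ : ∀ i, c (σ i) ≠ c i) {i j : α} (hi : i < σ i)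
    (hij : i ≤ j) (hcij : c i = c j) : j < σ j := by
  by_contra hj
  have σj_lt_j : σ j < j := lt_of_le_of_ne (not_lt.1 hj) (hσ.apply_ne j)
  have j_lt_σi : j < σ i := by
    by_contra! h
    exact hcσ i (le_antisymm ((hc h).trans hcij.ge) (hc hi.le))
  have σj_lt_i : σ j < i := by
    by_contra! h
    exact hcσ j (le_antisymm (hc σj_lt_j.le) (hcij.ge.trans (hc h)))
  have i_lt_j : i < j := lt_of_le_of_ne hij (by rintro rfl; exact hj hi)
  have := hσ.noncrossing (σ j) i σj_lt_i
  rw [hσ.involutive] at this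
  exact this i_lt_j j_lt_σi

end IsNoncrossingPairing

lemma subset_of_card_fiber_le [DecidableEq ι] {c : α → ι} {s t : Finset α}
    (hs : ∀ i ∈ s, ∀ j, i ≤ j → c i = c j → j ∈ s) (ht : ∀ i ∈ t, ∀ j, i ≤ j → c i = c j → j ∈ t)
    (hcard : ∀ k, #{i ∈ s | c i = k} ≤ #{i ∈ t | c i = k}) : s ⊆ t := by
  intro i his
  by_contra hit
  have fiber_ssubset : {j ∈ t | c j = c i} ⊂ {j ∈ s | c j = c i} := by
    refine (ssubset_iff_of_subset fun j hj => ?_).2 ⟨i, by simp [his], by simp [hit]⟩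
    obtain ⟨hjt, hji⟩ := mem_filter.1 hj
    have hij : i ≤ j := le_of_not_ge fun h => hit (ht j hjt i h hji)
    exact mem_filter.2 ⟨hs i his j hij hji.symm, hji⟩
  exact (hcard (c i)).not_gt (card_lt_card fiber_ssubset)

lemma IsNoncrossingPairing.eq_of_card_openers_fiber_eq [Fintype α] [PartialOrder ι] [DecidableEq ι]
    {c : α → ι} (hc : Monotone c) {σ τ : α → α} (hσ : IsNoncrossingPairing σ)
    (hcσ : ∀ i, c (σ i) ≠ c i) (hτ : IsNoncrossingPairing τ) (hcτ : ∀ i, c (τ i) ≠ c i)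
    (hcard : ∀ k, #{i ∈ openers σ | c i = k} = #{i ∈ openers τ | c i = k}) : σ = τ := by
  have upper {ρ : α → α} (hρ : IsNoncrossingPairing ρ) (hcρ : ∀ i, c (ρ i) ≠ c i) :
      ∀ i ∈ openers ρ, ∀ j, i ≤ j → c i = c j → j ∈ openers ρ := fun i hi j hij hcij =>
    mem_openers.2 (hρ.lt_apply_of_le_of_fiber_eq hc hcρ (mem_openers.1 hi) hij hcij)
  have openers_eq : openers σ = openers τ :=
    (subset_of_card_fiber_le (upper hσ hcσ) (upper hτ hcτ) fun k => (hcard k).le).antisymm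
      (subset_of_card_fiber_le (upper hτ hcτ) (upper hσ hcσ) fun k => (hcard k).ge)
  exact hσ.eq_of_lt_apply_iff hτ fun i => by rw [← mem_openers, openers_eq, mem_openers]

end Combinatorics

lemma linearIndependent_of_degree_injective {κ ι R : Type*} [CommRing R] (m : MonomialOrder ι)
    {P : κ → MvPolynomial ι R} (hlc : ∀ a, m.leadingCoeff (P a) ∈ nonZeroDivisors R)
    (hdeg : Function.Injective fun a => m.degree (P a)) : LinearIndependent R P := by
  classical
  rw [linearIndependent_iff']
  intro s g hg a ha
  by_contra hga
  -- Compare coefficients at the largest degree occurring with a nonzero scalar.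
  obtain ⟨b, hb, hmax⟩ := {x ∈ s | g x ≠ 0}.exists_max_image
    (fun x => m.toSyn (m.degree (P x))) ⟨a, mem_filter.2 ⟨ha, hga⟩⟩
  obtain ⟨hbs, hgb⟩ := mem_filter.1 hb
  have coeff_other : ∀ x ∈ s, x ≠ b → (g x • P x).coeff (m.degree (P b)) = 0 := by
    intro x hx hxb
    by_cases hgx : g x = 0
    · rw [hgx, zero_smul, coeff_zero]
    have degree_lt : m.toSyn (m.degree (P x)) < m.toSyn (m.degree (P b)) :=
      lt_of_le_of_ne (hmax x (mem_filter.2 ⟨hx, hgx⟩)) fun h =>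
        hxb (hdeg (m.toSyn.injective h))
    rw [coeff_smul, m.coeff_eq_zero_of_lt degree_lt, smul_zero]
  have coeff_eq : g b * m.leadingCoeff (P b) = 0 := by
    have := congrArg (coeff (m.degree (P b))) hg
    rwa [coeff_sum, sum_eq_single_of_mem b hbs coeff_other, coeff_smul, coeff_zero] at this
  exact hgb ((mul_right_mem_nonZeroDivisors_eq_zero_iff (hlc b)).1 coeff_eq)

section Symbols

variable {α ι R : Type*} [LinearOrder α] [Fintype α] [CommRing R]

/-- The symbol of the pairing `σ` of `α`, where `c i` is the index of the vector attached to `i`.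
It extends `symbolFun` to any commutative ring and any `c`. -/
def pairingSymbol (c : α → ι) (σ : α → α) (y : ι → Fin 2 → R) : R :=
  ∏ i ∈ openers σ, (y (c i) 0 * y (c (σ i)) 1 - y (c i) 1 * y (c (σ i)) 0)

variable (R) in
/-- The symbol of `σ` at the vectors `y_k = (X_k, 1)`, as a polynomial in the `X_k`. -/
noncomputable def pairingPolynomial (c : α → ι) (σ : α → α) : MvPolynomial ι R :=
  ∏ i ∈ openers σ, (X (c i) - X (c (σ i)))

lemma eval_pairingPolynomial (c : α → ι) (σ : α → α) (x : ι → R) :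
    eval x (pairingPolynomial R c σ) = pairingSymbol c σ fun k => ![x k, 1] := by
  simp [pairingPolynomial, pairingSymbol]

section Lex

variable [LinearOrder ι] [WellFoundedGT ι]

lemma lex_degree_X_lt [Nontrivial R] {a b : ι} (hab : a < b) :
    MonomialOrder.lex.toSyn (MonomialOrder.lex.degree (X b : MvPolynomial ι R)) <
      MonomialOrder.lex.toSyn (MonomialOrder.lex.degree (X a : MvPolynomial ι R)) := by
  simpa only [MonomialOrder.degree_X, MonomialOrder.lex_lt_iff] using
    Finsupp.Lex.single_lt_iff.2 hab

lemma lex_monic_X_sub_X {a b : ι} (hab : a < b) :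
    MonomialOrder.lex.Monic (X a - X b : MvPolynomial ι R) := by
  nontriviality R
  rw [MonomialOrder.Monic, MonomialOrder.leadingCoeff_sub_of_lt (lex_degree_X_lt hab),
    MonomialOrder.leadingCoeff_X]

lemma lex_degree_X_sub_X [Nontrivial R] {a b : ι} (hab : a < b) :
    MonomialOrder.lex.degree (X a - X b : MvPolynomial ι R) = Finsupp.single a 1 := by
  rw [MonomialOrder.degree_sub_of_lt (lex_degree_X_lt hab), MonomialOrder.degree_X]

variable {c : α → ι} {σ : α → α}

lemma lex_monic_pairingPolynomial (hc : Monotone c) (hcσ : ∀ i, c (σ i) ≠ c i) :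
    MonomialOrder.lex.Monic (pairingPolynomial R c σ) :=
  MonomialOrder.Monic.prod fun _ hi => lex_monic_X_sub_X (lt_of_mem_openers hc hcσ hi)

lemma lex_degree_pairingPolynomial [Nontrivial R] (hc : Monotone c) (hcσ : ∀ i, c (σ i) ≠ c i)
    (k : ι) :
    MonomialOrder.lex.degree (pairingPolynomial R c σ) k = #{i ∈ openers σ | c i = k} := by
  have factor_lt {i : α} (hi : i ∈ openers σ) : c i < c (σ i) := lt_of_mem_openers hc hcσ hi
  have degree_eq : MonomialOrder.lex.degree (pairingPolynomial R c σ) =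
      ∑ i ∈ openers σ, Finsupp.single (c i) 1 := by
    rw [pairingPolynomial, MonomialOrder.degree_prod_of_regular]
    · exact sum_congr rfl fun i hi => lex_degree_X_sub_X (factor_lt hi)
    · intro i hi
      rw [(lex_monic_X_sub_X (factor_lt hi)).leadingCoeff_eq_one]
      exact isRegular_one
  rw [degree_eq, Finsupp.finsetSum_apply, card_filter]
  exact sum_congr rfl fun i _ => Finsupp.single_apply

lemma linearIndependent_pairingPolynomial (hc : Monotone c) :
    LinearIndependent R
      (fun p : {σ : α → α // IsNoncrossingPairing σ ∧ ∀ i, c (σ i) ≠ c i} =>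
        pairingPolynomial R c p.1) := by
  nontriviality R
  refine linearIndependent_of_degree_injective MonomialOrder.lex (fun p => ?_) ?_
  · rw [(lex_monic_pairingPolynomial hc p.2.2).leadingCoeff_eq_one]
    exact one_mem _
  · rintro ⟨σ, hσ, hcσ⟩ ⟨τ, hτ, hcτ⟩ hdeg
    refine Subtype.ext (hσ.eq_of_card_openers_fiber_eq hc hcσ hτ hcτ fun k => ?_)
    simpa only [lex_degree_pairingPolynomial hc hcσ, lex_degree_pairingPolynomial hc hcτ]
      using DFunLike.congr_fun hdeg k

theorem noncrossing_symbols_linearIndependent_general [IsDomain R] [Infinite R]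
    (hc : Monotone c) :
    LinearIndependent R
      (fun p : {σ : α → α // IsNoncrossingPairing σ ∧ ∀ i, c (σ i) ≠ c i} =>
        (pairingSymbol c p.1 : (ι → Fin 2 → R) → R)) := by
  have eval_injective : LinearMap.ker (evalₗ R ι) = ⊥ :=
    LinearMap.ker_eq_bot.2 fun _ _ h => MvPolynomial.funext fun x => congrFun h x
  refine .of_comp (LinearMap.funLeft R R fun (x : ι → R) k => ![x k, 1]) ?_
  have restrict_eq :
      (LinearMap.funLeft R R fun (x : ι → R) k => ![x k, 1]) ∘
        (fun p : {σ : α → α // IsNoncrossingPairing σ ∧ ∀ i, c (σ i) ≠ c i} =>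
          pairingSymbol c p.1) =
      evalₗ R ι ∘ fun p => pairingPolynomial R c p.1 :=
    funext fun p => funext fun x => (eval_pairingPolynomial c p.1 x).symm
  rw [restrict_eq]
  exact (linearIndependent_pairingPolynomial hc).map' (evalₗ R ι) eval_injective

end Lex

end Symbols

lemma intervalIdx_monotone (m d : ℕ) : Monotone (intervalIdx m d) :=
  fun _ _ hij => Nat.div_le_div_right (c := d) hij

lemma symbolFun_eq_pairingSymbol (m d : ℕ) (σ : Equiv.Perm (Fin (m * d))) :
    symbolFun m d σ = pairingSymbol (intervalIdx m d) σ :=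
  rfl

lemma isNoncrossingPairing_of_isPairing {N : ℕ} {σ : Equiv.Perm (Fin N)} (hσ : IsPairing σ)
    (hnc : PairingNoncrossing σ) : IsNoncrossingPairing σ :=
  ⟨fun i => congrArg (· i) hσ.1, hσ.2, hnc⟩

/-- The inclusion of the index type of the noncrossing symbols, with its encoding by permutations,
into the index type of `noncrossing_symbols_linearIndependent_general`. -/
def pairingOfPerm {m d : ℕ}
    (p : {σ : Equiv.Perm (Fin (m * d)) //
      IsPairing σ ∧ PairingMPartite m d σ ∧ PairingNoncrossing σ}) :
    {σ : Fin (m * d) → Fin (m * d) //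
      IsNoncrossingPairing σ ∧ ∀ i, intervalIdx m d (σ i) ≠ intervalIdx m d i} :=
  ⟨p.1, isNoncrossingPairing_of_isPairing p.2.1 p.2.2.2, p.2.2.1⟩

lemma pairingOfPerm_injective (m d : ℕ) : Function.Injective (pairingOfPerm (m := m) (d := d)) :=
  fun _ _ h => Subtype.ext (DFunLike.coe_injective (congrArg Subtype.val h))

/-- **Linear independence of noncrossing symbols.** The family of symbols
`ω̃_π`, indexed by the `m`-partite noncrossing pair partitions `π` of `{1, ..., md}`,
is linearly independent (in the space of functions `(V*)^m → ℂ`). -/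
theorem noncrossing_symbols_linearIndependent (m d : ℕ) (hd : 1 ≤ d) :
    LinearIndependent ℂ
      (fun p : {σ : Equiv.Perm (Fin (m * d)) //
          IsPairing σ ∧ PairingMPartite m d σ ∧ PairingNoncrossing σ} =>
        symbolFun m d p.1) := by
  simp only [symbolFun_eq_pairingSymbol]
  exact (noncrossing_symbols_linearIndependent_general (intervalIdx_monotone m d)).comp
    pairingOfPerm (pairingOfPerm_injective m d)
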